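/- Let (F*, b*) with F* = [f*_1,…,f*_c] be a global minimizer of the cross-entropy loss achieving L*(D,y), let λ_d be the smallest eigenvalue of K = Σ_i d_i d_iᵀ, and let v be a corresponding unit eigenvector (K v = λ_d v, ‖v‖ = 1). Assume vᵀ f*_j ≠ 0 for every j, set α_j = −‖f*_j‖²/(vᵀ f*_j), F² = F* + v·αᵀ, and A = (1/2) Σ_{j=1}^{c} Σ_{j'=j+1}^{c} (α_j − α_{j'})². Then the columns of F* and F² satisfy f*_jᵀ f²_j = 0 for all j, and the joint loss J = L(F*, b*, D, y) + L(F², b*, D, y) satisfies 2L*(D,y) ≤ J ≤ 2L*(D,y) + A·λ_d. -/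

import Mathlib

open Matrix Finset Real

/-- Softmax cross-entropy loss `L(F, b, D, y) = -∑ i, log p_i(y_i)`. -/
noncomputable def celoss {d n c : ℕ} (D : Matrix (Fin d) (Fin n) ℝ) (y : Fin n → Fin c)
    (F : Matrix (Fin d) (Fin c) ℝ) (b : Fin c → ℝ) : ℝ :=
  -∑ i : Fin n, Real.log
    (Real.exp ((∑ u : Fin d, D u i * F u (y i)) + b (y i)) /
     ∑ j : Fin c, Real.exp ((∑ u : Fin d, D u i * F u j) + b j))

/-!
Moving `F*` by `v αᵀ` moves the logits of sample `i` by `(d_iᵀ v) α`. Expanding the product of the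
partition functions of the classifiers `F* ± v αᵀ` into pairs of classes and symmetrizing gives
terms `exp (z_j + z_k) cosh ((d_iᵀ v) (α_j - α_k))`, so `cosh x ≤ exp (x² / 2)` yields
`L(F* + v αᵀ) + L(F* - v αᵀ) ≤ 2 L(F*) + A ∑ i, (d_iᵀ v)²`. The linear terms cancel, and since
`L(F* - v αᵀ) ≥ L*` the bound passes to `L(F* + v αᵀ)` alone. For a unit eigenvector,
`∑ i, (d_iᵀ v)² = vᵀ K v = λ`.
-/

section LogSumExp

variable {ι : Type*} [Fintype ι]

lemma sum_exp_pos [Nonempty ι] (z : ι → ℝ) : 0 < ∑ j, exp (z j) :=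
  sum_pos (fun _ _ => exp_pos _) univ_nonempty

lemma sum_exp_add_mul_sum_exp_sub (z a : ι → ℝ) :
    (∑ j, exp (z j + a j)) * ∑ j, exp (z j - a j) =
      ∑ j, ∑ k, exp (z j) * exp (z k) * cosh (a j - a k) := by
  have expand : (∑ j, exp (z j + a j)) * ∑ j, exp (z j - a j) =
      ∑ j, ∑ k, exp (z j) * exp (z k) * exp (a j - a k) := by
    rw [sum_mul_sum]
    refine sum_congr rfl fun j _ => sum_congr rfl fun k _ => ?_
    rw [← exp_add, ← exp_add, ← exp_add]
    exact congrArg exp (by ring)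
  have expand_swap : (∑ j, exp (z j + a j)) * ∑ j, exp (z j - a j) =
      ∑ j, ∑ k, exp (z j) * exp (z k) * exp (-(a j - a k)) := by
    rw [expand, sum_comm]
    simp only [neg_sub, mul_comm (exp (z _)) (exp (z _))]
  have average : ∑ j, ∑ k, exp (z j) * exp (z k) * cosh (a j - a k) =
      ((∑ j, ∑ k, exp (z j) * exp (z k) * exp (a j - a k)) +
        ∑ j, ∑ k, exp (z j) * exp (z k) * exp (-(a j - a k))) / 2 := by
    simp only [cosh_eq, ← sum_add_distrib, sum_div, ← mul_add, mul_div_assoc]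
  rw [average, ← expand, ← expand_swap, add_self_div_two]

lemma sum_exp_add_mul_sum_exp_sub_le (z : ι → ℝ) {a : ι → ℝ} {q : ℝ}
    (ha : ∀ j k, (a j - a k) ^ 2 ≤ q) :
    (∑ j, exp (z j + a j)) * ∑ j, exp (z j - a j) ≤ (∑ j, exp (z j)) ^ 2 * exp (q / 2) := by
  have cosh_le (j k : ι) : cosh (a j - a k) ≤ exp (q / 2) :=
    (cosh_le_exp_half_sq _).trans (by gcongr; exact ha j k)
  calc (∑ j, exp (z j + a j)) * ∑ j, exp (z j - a j)
      = ∑ j, ∑ k, exp (z j) * exp (z k) * cosh (a j - a k) := sum_exp_add_mul_sum_exp_sub z a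
    _ ≤ ∑ j, ∑ k, exp (z j) * exp (z k) * exp (q / 2) := by gcongr; exact cosh_le _ _
    _ = (∑ j, exp (z j)) ^ 2 * exp (q / 2) := by
        rw [sq, sum_mul_sum]
        simp only [sum_mul]

lemma log_sum_exp_add_add_log_sum_exp_sub_le [Nonempty ι] (z : ι → ℝ) {a : ι → ℝ} {q : ℝ}
    (ha : ∀ j k, (a j - a k) ^ 2 ≤ q) :
    log (∑ j, exp (z j + a j)) + log (∑ j, exp (z j - a j)) ≤
      2 * log (∑ j, exp (z j)) + q / 2 := by
  have hadd := sum_exp_pos fun j => z j + a j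
  have hsub := sum_exp_pos fun j => z j - a j
  have hz := sum_exp_pos z
  calc log (∑ j, exp (z j + a j)) + log (∑ j, exp (z j - a j))
      = log ((∑ j, exp (z j + a j)) * ∑ j, exp (z j - a j)) := (log_mul hadd.ne' hsub.ne').symm
    _ ≤ log ((∑ j, exp (z j)) ^ 2 * exp (q / 2)) :=
        log_le_log (mul_pos hadd hsub) (sum_exp_add_mul_sum_exp_sub_le z ha)
    _ = 2 * log (∑ j, exp (z j)) + q / 2 := by
        rw [log_mul (pow_pos hz 2).ne' (exp_ne_zero _), log_pow, log_exp, Nat.cast_ofNat]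

/-- The cross-entropy loss of one sample of class `k` with logits `z`, that is, minus the logarithm
of the softmax probability `exp (z k) / ∑ j, exp (z j)`. -/
noncomputable def softmaxLoss (z : ι → ℝ) (k : ι) : ℝ :=
  log (∑ j, exp (z j)) - z k

lemma softmaxLoss_eq_neg_log (z : ι → ℝ) (k : ι) :
    softmaxLoss z k = -log (exp (z k) / ∑ j, exp (z j)) := by
  have : Nonempty ι := ⟨k⟩
  rw [softmaxLoss, log_div (exp_ne_zero _) (sum_exp_pos z).ne', log_exp, neg_sub]

lemma softmaxLoss_add_add_softmaxLoss_sub_le (z : ι → ℝ) {a : ι → ℝ} {q : ℝ}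
    (ha : ∀ j k, (a j - a k) ^ 2 ≤ q) (k : ι) :
    softmaxLoss (z + a) k + softmaxLoss (z - a) k ≤ 2 * softmaxLoss z k + q / 2 := by
  have : Nonempty ι := ⟨k⟩
  have := log_sum_exp_add_add_log_sum_exp_sub_le z ha
  simp only [softmaxLoss, Pi.add_apply, Pi.sub_apply]
  linarith

end LogSumExp

section PairwiseDifferences

variable {ι R : Type*} [Fintype ι] [LinearOrder ι] [LocallyFiniteOrderTop ι]
  [CommRing R] [LinearOrder R] [IsStrictOrderedRing R]

lemma sq_sub_le_sum_sum_Ioi (α : ι → R) (j k : ι) :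
    (α j - α k) ^ 2 ≤ ∑ j, ∑ j' ∈ Ioi j, (α j - α j') ^ 2 := by
  have inner_nonneg (j : ι) : 0 ≤ ∑ j' ∈ Ioi j, (α j - α j') ^ 2 :=
    sum_nonneg fun _ _ => sq_nonneg _
  have of_lt {j k : ι} (hjk : j < k) :
      (α j - α k) ^ 2 ≤ ∑ j, ∑ j' ∈ Ioi j, (α j - α j') ^ 2 :=
    calc (α j - α k) ^ 2
        ≤ ∑ j' ∈ Ioi j, (α j - α j') ^ 2 :=
          single_le_sum (f := fun j' => (α j - α j') ^ 2) (fun _ _ => sq_nonneg _)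
            (mem_Ioi.2 hjk)
      _ ≤ ∑ j, ∑ j' ∈ Ioi j, (α j - α j') ^ 2 :=
          single_le_sum (fun j _ => inner_nonneg j) (mem_univ j)
  rcases lt_trichotomy j k with hjk | rfl | hkj
  · exact of_lt hjk
  · simpa using sum_nonneg fun j _ => inner_nonneg j
  · rw [sub_sq_comm]
    exact of_lt hkj

end PairwiseDifferences

section DotProduct

variable {m n R : Type*} [Fintype m]

lemma dotProduct_sum_vecMulVec_self_mulVec [Fintype n] [CommSemiring R] (D : Matrix m n R)
    (v : m → R) :
    v ⬝ᵥ (∑ i, vecMulVec (fun u => D u i) (fun u => D u i)) *ᵥ v = ∑ i, (Dᵀ *ᵥ v) i ^ 2 := by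
  rw [sum_mulVec, dotProduct_sum]
  refine sum_congr rfl fun i _ => ?_
  rw [vecMulVec_mulVec, op_smul_eq_smul, dotProduct_smul, smul_eq_mul, dotProduct_comm v, sq]
  rfl

lemma dotProduct_add_smul_neg_div_eq_zero [Field R] {f v : m → R} (hvf : v ⬝ᵥ f ≠ 0) :
    f ⬝ᵥ (f + (-(f ⬝ᵥ f) / (v ⬝ᵥ f)) • v) = 0 := by
  rw [dotProduct_add, dotProduct_smul, smul_eq_mul, dotProduct_comm f v, div_mul_cancel₀ _ hvf,
    add_neg_cancel]

end DotProduct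

section Classifier

variable {d n c : ℕ} (D : Matrix (Fin d) (Fin n) ℝ) (y : Fin n → Fin c)

lemma celoss_eq_sum_softmaxLoss (F : Matrix (Fin d) (Fin c) ℝ) (b : Fin c → ℝ) :
    celoss D y F b = ∑ i, softmaxLoss ((Dᵀ * F) i + b) (y i) := by
  simp only [celoss, softmaxLoss_eq_neg_log, sum_neg_distrib, Pi.add_apply, mul_apply,
    transpose_apply]

lemma celoss_add_vecMulVec_add_celoss_sub_vecMulVec_le (F : Matrix (Fin d) (Fin c) ℝ)
    (b : Fin c → ℝ) (v : Fin d → ℝ) {α : Fin c → ℝ} {q : ℝ} (hα : ∀ j k, (α j - α k) ^ 2 ≤ q) :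
    celoss D y (F + vecMulVec v α) b + celoss D y (F - vecMulVec v α) b ≤
      2 * celoss D y F b + q / 2 * ∑ i, (Dᵀ *ᵥ v) i ^ 2 := by
  simp only [celoss_eq_sum_softmaxLoss, Matrix.mul_add, Matrix.mul_sub, mul_vecMulVec, mul_sum,
    ← sum_add_distrib]
  refine sum_le_sum fun i _ => ?_
  set s := (Dᵀ *ᵥ v) i
  set z := (Dᵀ * F) i + b
  have logits_add : (Dᵀ * F + vecMulVec (Dᵀ *ᵥ v) α) i + b = z + s • α := add_right_comm _ _ _
  have logits_sub : (Dᵀ * F - vecMulVec (Dᵀ *ᵥ v) α) i + b = z - s • α := sub_add_eq_add_sub _ _ _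
  have sq_smul_sub_le (j k : Fin c) : ((s • α) j - (s • α) k) ^ 2 ≤ s ^ 2 * q := by
    simp only [Pi.smul_apply, smul_eq_mul, ← mul_sub, mul_pow]
    gcongr
    exact hα j k
  calc _ = softmaxLoss (z + s • α) (y i) + softmaxLoss (z - s • α) (y i) := by
        rw [logits_add, logits_sub]
    _ ≤ 2 * softmaxLoss z (y i) + s ^ 2 * q / 2 :=
        softmaxLoss_add_add_softmaxLoss_sub_le z sq_smul_sub_le (y i)
    _ = 2 * softmaxLoss z (y i) + q / 2 * s ^ 2 := by ring

variable {D y}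

lemma celoss_add_vecMulVec_le_of_forall_le {F : Matrix (Fin d) (Fin c) ℝ} {b : Fin c → ℝ}
    (hmin : ∀ G, celoss D y F b ≤ celoss D y G b) (v : Fin d → ℝ) {α : Fin c → ℝ} {q : ℝ}
    (hα : ∀ j k, (α j - α k) ^ 2 ≤ q) :
    celoss D y (F + vecMulVec v α) b ≤ celoss D y F b + q / 2 * ∑ i, (Dᵀ *ᵥ v) i ^ 2 := by
  linarith [celoss_add_vecMulVec_add_celoss_sub_vecMulVec_le D y F b v hα,
    hmin (F - vecMulVec v α)]

end Classifier

theorem multiverse_stmt8_general {d n c : ℕ} (D : Matrix (Fin d) (Fin n) ℝ) (y : Fin n → Fin c)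
    (Fstar : Matrix (Fin d) (Fin c) ℝ) (bstar : Fin c → ℝ)
    (hmin : ∀ F : Matrix (Fin d) (Fin c) ℝ, celoss D y Fstar bstar ≤ celoss D y F bstar)
    (v : Fin d → ℝ) (hproj : ∀ j : Fin c, (∑ u : Fin d, v u * Fstar u j) ≠ 0)
    (α : Fin c → ℝ)
    (hα : ∀ j : Fin c, α j = -(∑ u : Fin d, Fstar u j * Fstar u j) /
      (∑ u : Fin d, v u * Fstar u j))
    (F2 : Matrix (Fin d) (Fin c) ℝ)
    (hF2 : ∀ (u : Fin d) (j : Fin c), F2 u j = Fstar u j + v u * α j) :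
    (∀ j : Fin c, (∑ u : Fin d, Fstar u j * F2 u j) = 0) ∧
    2 * celoss D y Fstar bstar ≤ celoss D y Fstar bstar + celoss D y F2 bstar ∧
    celoss D y Fstar bstar + celoss D y F2 bstar ≤ 2 * celoss D y Fstar bstar +
      ((1 / 2 : ℝ) * ∑ j : Fin c, ∑ j' ∈ Finset.Ioi j, (α j - α j') ^ 2) *
        (v ⬝ᵥ (∑ i : Fin n, vecMulVec (fun u => D u i) (fun u => D u i)) *ᵥ v) := by
  obtain rfl : F2 = Fstar + vecMulVec v α := Matrix.ext hF2
  refine ⟨fun j => ?_, by linarith [hmin (Fstar + vecMulVec v α)], ?_⟩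
  · have hcol : (fun u => (Fstar + vecMulVec v α) u j) = Fstar.col j + α j • v :=
      funext fun u => congrArg (Fstar u j + ·) (mul_comm (v u) (α j))
    change Fstar.col j ⬝ᵥ (fun u => (Fstar + vecMulVec v α) u j) = 0
    rw [hcol, hα]
    exact dotProduct_add_smul_neg_div_eq_zero (hproj j)
  · rw [dotProduct_sum_vecMulVec_self_mulVec]
    linarith [celoss_add_vecMulVec_le_of_forall_le hmin v (sq_sub_le_sum_sum_Ioi α)]

/-- Construction of a second, columnwise-orthogonal classifier `F² = F* + v·αᵀ` along a
unit eigenvector `v` of `K = ∑ d_i d_iᵀ` for its smallest eigenvalue `λ_d`, with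
`α_j = −‖f*_j‖²/(vᵀ f*_j)`.  The columns satisfy `f*_jᵀ f²_j = 0`, and the joint loss
`J = L(F*) + L(F²)` satisfies `2L* ≤ J ≤ 2L* + A·λ_d` where
`A = ½ ∑_{j<j'} (α_j − α_{j'})²`. -/
theorem multiverse_stmt8 {d n c : ℕ} (D : Matrix (Fin d) (Fin n) ℝ) (y : Fin n → Fin c)
    (Fstar : Matrix (Fin d) (Fin c) ℝ) (bstar : Fin c → ℝ)
    (hmin : ∀ (F : Matrix (Fin d) (Fin c) ℝ) (b : Fin c → ℝ),
      celoss D y Fstar bstar ≤ celoss D y F b)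
    (lam : ℝ) (v : Fin d → ℝ) (hv : v ≠ 0) (hvunit : ∑ u : Fin d, v u * v u = 1)
    (heig : (∑ i : Fin n, Matrix.vecMulVec (fun u => D u i) (fun u => D u i)) *ᵥ v = lam • v)
    (hsmall : ∀ (μ : ℝ) (w : Fin d → ℝ), w ≠ 0 →
      (∑ i : Fin n, Matrix.vecMulVec (fun u => D u i) (fun u => D u i)) *ᵥ w = μ • w →
      lam ≤ μ)
    (hproj : ∀ j : Fin c, (∑ u : Fin d, v u * Fstar u j) ≠ 0)
    (α : Fin c → ℝ)
    (hα : ∀ j : Fin c, α j = -(∑ u : Fin d, Fstar u j * Fstar u j) /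
      (∑ u : Fin d, v u * Fstar u j))
    (F2 : Matrix (Fin d) (Fin c) ℝ)
    (hF2 : ∀ (u : Fin d) (j : Fin c), F2 u j = Fstar u j + v u * α j) :
    (∀ j : Fin c, (∑ u : Fin d, Fstar u j * F2 u j) = 0) ∧
    2 * celoss D y Fstar bstar ≤ celoss D y Fstar bstar + celoss D y F2 bstar ∧
    celoss D y Fstar bstar + celoss D y F2 bstar ≤ 2 * celoss D y Fstar bstar +
      ((1 / 2 : ℝ) * ∑ j : Fin c, ∑ j' ∈ Finset.Ioi j, (α j - α j') ^ 2) * lam := by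
  have hlam : v ⬝ᵥ (∑ i, vecMulVec (fun u => D u i) (fun u => D u i)) *ᵥ v = lam := by
    rw [heig, dotProduct_smul, show v ⬝ᵥ v = 1 from hvunit, smul_eq_mul, mul_one]
  exact hlam ▸ multiverse_stmt8_general D y Fstar bstar (hmin · bstar) v hproj α hα F2 hF2
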